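/- The relation rE on Exp is terminating and confluent, and its equivalence closure coincides with ≈: for all t u : Exp, EqvGen rE t u if and only if t ≈ u. -/

import Mathlib

/-- Arithmetic expressions. -/
inductive Exp : Type
  | Zero : Exp
  | One : Exp
  | Opp : Exp → Exp
  | Plus : Exp → Exp → Exp
deriving DecidableEq

/-- The smallest equivalence relation on `Exp` compatible with `Opp` and `Plus` such
that `Zero` is neutral for `Plus`. -/
inductive expEq : Exp → Exp → Prop
  | plusZero (t : Exp) : expEq (Exp.Plus t Exp.Zero) t
  | zeroPlus (t : Exp) : expEq (Exp.Plus Exp.Zero t) t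
  | refl (t : Exp) : expEq t t
  | symm {t u : Exp} : expEq t u → expEq u t
  | trans {t u v : Exp} : expEq t u → expEq u v → expEq t v
  | opp {t t' : Exp} : expEq t t' → expEq (Exp.Opp t) (Exp.Opp t')
  | plus {t t' u u' : Exp} : expEq t t' → expEq u u' →
      expEq (Exp.Plus t u) (Exp.Plus t' u')

/-- The rewrite relation erasing neutral `Zero`s, closed under contexts. -/
inductive rE : Exp → Exp → Prop
  | plusZero (t : Exp) : rE (Exp.Plus t Exp.Zero) t
  | zeroPlus (t : Exp) : rE (Exp.Plus Exp.Zero t) t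
  | opp {t t' : Exp} : rE t t' → rE (Exp.Opp t) (Exp.Opp t')
  | plusL {t t' : Exp} (u : Exp) : rE t t' → rE (Exp.Plus t u) (Exp.Plus t' u)
  | plusR {t t' : Exp} (u : Exp) : rE t t' → rE (Exp.Plus u t) (Exp.Plus u t')

/-!
Let `normalize` evaluate an expression bottom-up, replacing each `Plus` by a sum that absorbs
`Zero`. Every expression rewrites to its normal form, and `≈`-equivalent expressions have equal
normal forms since the absorbing sum satisfies the two unit laws. So expressions convertible into
one another share a reduct, which gives confluence, and `≈`-equivalent ones are convertible.
Termination holds because each step shrinks the expression.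
-/

section CanonicalReduct

open Relation

variable {α : Type*} {r : α → α → Prop} {f : α → α} {a b c : α}

theorem eqvGen_of_reflTransGen (h : ReflTransGen r a b) : EqvGen r a b :=
  reflTransGen_le_of_equivalence_of_le (EqvGen.is_equivalence r) EqvGen.rel a b h

/-- `f` chooses for each element an `r`-reduct, in such a way that the two ends of every `r`-step
get the same one. It abstracts a normalization function for `r`, except that `f a` may be
reducible. -/
structure IsCanonicalReduct (r : α → α → Prop) (f : α → α) : Prop where
  reflTransGen (a : α) : ReflTransGen r a (f a)
  map_eq {a b : α} (h : r a b) : f a = f b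

namespace IsCanonicalReduct

theorem eqvGen_iff (hf : IsCanonicalReduct r f) : EqvGen r a b ↔ f a = f b where
  mp h := congrArg (Quot.lift f fun _ _ => hf.map_eq) (Quot.eqvGen_sound h)
  mpr h := by
    have ha : EqvGen r a (f a) := eqvGen_of_reflTransGen (hf.reflTransGen a)
    have hb : EqvGen r b (f b) := eqvGen_of_reflTransGen (hf.reflTransGen b)
    exact EqvGen.trans _ _ _ (h ▸ ha) hb.symm

theorem join_of_eqvGen (hf : IsCanonicalReduct r f) (h : EqvGen r a b) :
    Join (ReflTransGen r) a b :=
  ⟨f a, hf.reflTransGen a, hf.eqvGen_iff.mp h ▸ hf.reflTransGen b⟩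

theorem confluent (hf : IsCanonicalReduct r f) (hb : ReflTransGen r a b)
    (hc : ReflTransGen r a c) : Join (ReflTransGen r) b c :=
  hf.join_of_eqvGen
    (EqvGen.trans _ _ _ (eqvGen_of_reflTransGen hb).symm (eqvGen_of_reflTransGen hc))

end IsCanonicalReduct

end CanonicalReduct

namespace Exp

/-- The sum of two expressions with `Zero` as a strict unit: `Plus t u`, unless one summand is
`Zero`, in which case the other summand. It is the operation by which `normalize` interprets
`Plus`. -/
def absorbingPlus : Exp → Exp → Exp
  | Zero, u => u
  | t, Zero => t
  | t, u => Plus t u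

theorem zero_absorbingPlus (t : Exp) : absorbingPlus Zero t = t := by
  cases t <;> rfl

theorem absorbingPlus_zero (t : Exp) : absorbingPlus t Zero = t := by
  cases t <;> rfl

/-- The normal form of an expression for `rE`: all neutral `Zero`s are erased, innermost first. -/
def normalize : Exp → Exp
  | Zero => Zero
  | One => One
  | Opp t => Opp (normalize t)
  | Plus t u => absorbingPlus (normalize t) (normalize u)

end Exp

theorem expEq.equivalence : Equivalence expEq := ⟨.refl, .symm, .trans⟩

theorem expEq.normalize_eq {t u : Exp} (h : expEq t u) : t.normalize = u.normalize := by
  induction h with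
  | plusZero t => exact Exp.absorbingPlus_zero t.normalize
  | zeroPlus t => exact Exp.zero_absorbingPlus t.normalize
  | refl t => rfl
  | symm _ ih => exact ih.symm
  | trans _ _ ih₁ ih₂ => exact ih₁.trans ih₂
  | opp _ ih => exact congrArg Exp.Opp ih
  | plus _ _ ih₁ ih₂ => exact congrArg₂ Exp.absorbingPlus ih₁ ih₂

namespace rE

open Relation

theorem sizeOf_lt {t u : Exp} (h : rE t u) : sizeOf u < sizeOf t := by
  induction h <;> simp only [Exp.Opp.sizeOf_spec, Exp.Plus.sizeOf_spec] <;> omega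

theorem wellFounded_swap : WellFounded (fun t u : Exp => rE u t) :=
  Subrelation.wf sizeOf_lt (measure sizeOf).wf

theorem to_expEq {t u : Exp} (h : rE t u) : expEq t u := by
  induction h with
  | plusZero t => exact .plusZero t
  | zeroPlus t => exact .zeroPlus t
  | opp _ ih => exact .opp ih
  | plusL u _ ih => exact .plus ih (.refl u)
  | plusR u _ ih => exact .plus (.refl u) ih

theorem reflTransGen_opp {t t' : Exp} (h : ReflTransGen rE t t') :
    ReflTransGen rE (.Opp t) (.Opp t') :=
  h.lift Exp.Opp fun _ _ => opp

theorem reflTransGen_plus {t t' u u' : Exp} (ht : ReflTransGen rE t t')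
    (hu : ReflTransGen rE u u') : ReflTransGen rE (.Plus t u) (.Plus t' u') :=
  (ht.lift (Exp.Plus · u) fun _ _ => plusL u).trans (hu.lift (Exp.Plus t') fun _ _ => plusR t')

theorem reflTransGen_absorbingPlus (t u : Exp) :
    ReflTransGen rE (.Plus t u) (t.absorbingPlus u) := by
  unfold Exp.absorbingPlus
  split
  · exact .single (zeroPlus _)
  · exact .single (plusZero _)
  · exact .refl

theorem reflTransGen_normalize (t : Exp) : ReflTransGen rE t t.normalize := by
  induction t with
  | Zero => exact .refl
  | One => exact .refl
  | Opp t ih => exact reflTransGen_opp ih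
  | Plus t u iht ihu => exact (reflTransGen_plus iht ihu).trans (reflTransGen_absorbingPlus _ _)

theorem isCanonicalReduct_normalize : IsCanonicalReduct rE Exp.normalize where
  reflTransGen := reflTransGen_normalize
  map_eq h := h.to_expEq.normalize_eq

theorem eqvGen_iff_expEq {t u : Exp} : EqvGen rE t u ↔ expEq t u where
  mp h := expEq.equivalence.eqvGen_iff.mp (EqvGen.mono (fun _ _ => to_expEq) _ _ h)
  mpr h := isCanonicalReduct_normalize.eqvGen_iff.mpr h.normalize_eq

end rE

theorem rE_terminating_confluent_and_eqvGen_eq :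
    WellFounded (fun t u : Exp => rE u t) ∧
    (∀ t u v : Exp, Relation.ReflTransGen rE t u → Relation.ReflTransGen rE t v →
        ∃ w, Relation.ReflTransGen rE u w ∧ Relation.ReflTransGen rE v w) ∧
    (∀ t u : Exp, Relation.EqvGen rE t u ↔ expEq t u) :=
  ⟨rE.wellFounded_swap,
    fun _ _ _ => rE.isCanonicalReduct_normalize.confluent,
    fun _ _ => rE.eqvGen_iff_expEq⟩
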